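/- arXiv:1502.03415 — 4 statements merged into one kernel-verified Lean document; each statement's English description precedes it below -/
import Mathlib

section
/- Let n = n_y + 1 and let P ∈ ℝ^{n×n} be a positive definite matrix written in block form P = [[P₁₁, P₁₂],[P₁₂ᵀ, P₂₂]] with P₁₁ ∈ ℝ^{n_y×n_y}, P₁₂ ∈ ℝ^{n_y×1} and P₂₂ ∈ ℝ (a positive scalar). Let A = [[H₁, H₂],[F₁, F₂]] with H₁ ∈ ℝ^{n_y×n_y}, H₂ ∈ ℝ^{n_y×1}, F₁ ∈ ℝ^{1×n_y}, F₂ ∈ ℝ, let G ∈ ℝ with B := [0; G] ∈ ℝ^{n×1}, and let K ∈ ℝ^{1×n} be such that (A + BK)ᵀP + P(A + BK) is negative definite. Define T := [I_{n_y}; −P₁₂ᵀ/P₂₂] ∈ ℝ^{n×n_y} and the Schur complement P_y := P₁₁ − P₁₂P₂₂⁻¹P₁₂ᵀ. Then TᵀP = [P_y, 0] (block row), TᵀPB = 0, P_y is positive definite, and P_y(H₁ − H₂P₂₂⁻¹P₁₂ᵀ) + (H₁ − H₂P₂₂⁻¹P₁₂ᵀ)ᵀP_y is negative definite. -/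
open Matrix Filter Topology Asymptotics

noncomputable section

/-- `V` is proper: `V χ → ∞` as `‖χ‖ → ∞`. -/
def IsProper {E : Type*} [NormedAddCommGroup E] (V : E → ℝ) : Prop :=
  Filter.Tendsto V (Bornology.cobounded E) Filter.atTop

/-- `V` is positive definite: `V 0 = 0` and `V x > 0` for `x ≠ 0`. -/
def IsPosDefFn {E : Type*} [NormedAddCommGroup E] (V : E → ℝ) : Prop :=
  V 0 = 0 ∧ ∀ x : E, x ≠ 0 → 0 < V x

/-- The Hessian matrix of `V` at `x`. -/
def hessianAt {n : ℕ} (V : (Fin n → ℝ) → ℝ) (x : Fin n → ℝ) :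
    Matrix (Fin n) (Fin n) ℝ :=
  Matrix.of fun i j => iteratedFDeriv ℝ 2 V x ![Pi.single i 1, Pi.single j 1]

/-- A real square matrix is Hurwitz if all of its (complex) eigenvalues have
negative real part. -/
def Hurwitz {ι : Type*} [Fintype ι] [DecidableEq ι] (M : Matrix ι ι ℝ) : Prop :=
  ∀ μ : ℂ, μ ∈ spectrum ℂ (M.map (algebraMap ℝ ℂ)) → μ.re < 0

/-- Global asymptotic stability of the origin for `χ' = F (χ)`:
(i) Lyapunov stability of the origin, and (ii) for every initial condition there is a
solution defined on all of `[0, ∞)` converging to the origin (for a locally Lipschitz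
vector field, by uniqueness of solutions, this is equivalent to requiring every maximal
solution to be defined on `[0,∞)` and to converge to the origin). -/
def IsGAS {E : Type*} [NormedAddCommGroup E] [NormedSpace ℝ E] (F : E → E) : Prop :=
  (∀ ε > 0, ∃ δ > 0, ∀ (χ : ℝ → E) (T : ℝ),
      (∀ t ∈ Set.Ico (0:ℝ) T, HasDerivAt χ (F (χ t)) t) →
      ‖χ 0‖ ≤ δ → ∀ t ∈ Set.Ico (0:ℝ) T, ‖χ t‖ ≤ ε) ∧
  (∀ x₀ : E, ∃ χ : ℝ → E, χ 0 = x₀ ∧ (∀ t : ℝ, 0 ≤ t → HasDerivAt χ (F (χ t)) t) ∧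
      Filter.Tendsto χ Filter.atTop (nhds 0))


/-- Block computation for the backstepping Lyapunov matrix: with
`T := [I ; −P₁₂ᵀ/P₂₂]` and the Schur complement `P_y := P₁₁ − P₁₂P₂₂⁻¹P₁₂ᵀ`, one has
`TᵀP = [P_y 0]`, `TᵀPB = 0`, `P_y` is positive definite, and
`P_y(H₁ − H₂P₂₂⁻¹P₁₂ᵀ) + (H₁ − H₂P₂₂⁻¹P₁₂ᵀ)ᵀP_y` is negative definite. -/
theorem stmt13 {ny : ℕ}
    (P₁₁ : Matrix (Fin ny) (Fin ny) ℝ) (P₁₂ : Fin ny → ℝ) (P₂₂ : ℝ) (hP₂₂ : 0 < P₂₂)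
    (H₁ : Matrix (Fin ny) (Fin ny) ℝ) (H₂ F₁ : Fin ny → ℝ) (F₂ G : ℝ)
    (P : Matrix (Fin ny ⊕ Fin 1) (Fin ny ⊕ Fin 1) ℝ)
    (hP : P = Matrix.fromBlocks P₁₁ (Matrix.of fun i _ => P₁₂ i)
        (Matrix.of fun _ j => P₁₂ j) (Matrix.of fun _ _ => P₂₂))
    (hPpos : P.PosDef)
    (A : Matrix (Fin ny ⊕ Fin 1) (Fin ny ⊕ Fin 1) ℝ)
    (hA : A = Matrix.fromBlocks H₁ (Matrix.of fun i _ => H₂ i)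
        (Matrix.of fun _ j => F₁ j) (Matrix.of fun _ _ => F₂))
    (B : Matrix (Fin ny ⊕ Fin 1) (Fin 1) ℝ)
    (hB : B = Matrix.of fun i (_ : Fin 1) => Sum.elim (fun _ => (0:ℝ)) (fun _ => G) i)
    (K : Matrix (Fin 1) (Fin ny ⊕ Fin 1) ℝ)
    (hLyap : (-((A + B * K)ᵀ * P + P * (A + B * K))).PosDef)
    (T : Matrix (Fin ny ⊕ Fin 1) (Fin ny) ℝ)
    (hT : T = Matrix.of fun i j =>
        Sum.elim (fun i' => if i' = j then (1:ℝ) else 0) (fun _ => -P₁₂ j / P₂₂) i)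
    (Py : Matrix (Fin ny) (Fin ny) ℝ)
    (hPy : Py = P₁₁ - P₂₂⁻¹ • Matrix.vecMulVec P₁₂ P₁₂) :
    Tᵀ * P = (Matrix.of fun i j => Sum.elim (fun j' => Py i j') (fun _ => (0:ℝ)) j) ∧
    Tᵀ * P * B = 0 ∧
    Py.PosDef ∧
    (-(Py * (H₁ - P₂₂⁻¹ • Matrix.vecMulVec H₂ P₁₂)
        + (H₁ - P₂₂⁻¹ • Matrix.vecMulVec H₂ P₁₂)ᵀ * Py)).PosDef := by
  have hp : P₂₂ ≠ 0 := hP₂₂.ne'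
  have h1 : Tᵀ * P = (Matrix.of fun i j => Sum.elim (fun j' => Py i j') (fun _ => (0:ℝ)) j) := by
    subst hP hT hPy
    ext i j
    rcases j with j | j
    · simp [Matrix.mul_apply, Matrix.vecMulVec_apply]
      field_simp
      ring
    · simp [Matrix.mul_apply]
      field_simp
      ring
  have h2 : Tᵀ * P * B = 0 := by
    rw [h1, hB]
    ext i j
    simp [Matrix.mul_apply]
  have hTinj : Function.Injective T.mulVec := by
    intro x y hxy
    ext i
    have := congrFun hxy (Sum.inl i)
    simpa [hT, Matrix.mulVec, dotProduct] using this
  have h3 : Tᵀ * P * T = Py := by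
    rw [h1, hT]
    ext i j
    simp [Matrix.mul_apply]
  have h4 : Tᵀ * P * A * T = Py * (H₁ - P₂₂⁻¹ • Matrix.vecMulVec H₂ P₁₂) := by
    have h5 : A * T = Matrix.of fun i j => Sum.elim
        (fun i' => (H₁ - P₂₂⁻¹ • Matrix.vecMulVec H₂ P₁₂) i' j)
        (fun _ => (A * T) (Sum.inr 0) j) i := by
      ext i j
      rcases i with i | i
      · simp [hA, hT, Matrix.mul_apply, Matrix.vecMulVec_apply]
        field_simp
        ring
      · obtain rfl : i = 0 := Subsingleton.elim _ _
        rfl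
    rw [Matrix.mul_assoc, h5, h1]
    ext i j
    simp [Matrix.mul_apply]
  have hPt : Pᵀ = P := by simpa using hPpos.isHermitian.eq
  have hPyt : Pyᵀ = Py := by
    rw [← h3]
    simp [Matrix.transpose_mul, hPt, Matrix.mul_assoc]
  have h6 : Tᵀ * (P * (A + B * K)) * T = Py * (H₁ - P₂₂⁻¹ • Matrix.vecMulVec H₂ P₁₂) := by
    rw [← h4, Matrix.mul_add, Matrix.mul_add, ← Matrix.mul_assoc P B K,
      ← Matrix.mul_assoc Tᵀ (P * B) K, ← Matrix.mul_assoc Tᵀ P B, h2, Matrix.zero_mul, add_zero,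
      ← Matrix.mul_assoc]
  have h7 : Tᵀ * ((A + B * K)ᵀ * P) * T
      = (H₁ - P₂₂⁻¹ • Matrix.vecMulVec H₂ P₁₂)ᵀ * Py := by
    have := congrArg Matrix.transpose h6
    rw [Matrix.transpose_mul, Matrix.transpose_mul, Matrix.transpose_mul, Matrix.transpose_mul,
      hPyt, hPt, Matrix.transpose_transpose, ← Matrix.mul_assoc] at this
    exact this
  refine ⟨h1, h2, ?_, ?_⟩
  · have := hPpos.conjTranspose_mul_mul_same hTinj
    rwa [Matrix.conjTranspose_eq_transpose_of_trivial, h3] at this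
  · have := hLyap.conjTranspose_mul_mul_same hTinj
    rwa [Matrix.conjTranspose_eq_transpose_of_trivial, Matrix.mul_neg, Matrix.neg_mul,
      Matrix.mul_add, Matrix.add_mul, h6, h7, add_comm] at this
end
end

section
/- Consider the strict-feedback system dy/dt = h₁(y) + h₂(y)x, dx/dt = f(y,x) + g(y,x)u with y ∈ ℝ^{n_y}, x ∈ ℝ, u ∈ ℝ, where h₁, h₂, f, g are continuous and g(y,x) ≠ 0 for all (y,x); write a(y,x) := (h₁(y) + h₂(y)x, f(y,x)) and b(y,x) := (0, g(y,x)) ∈ ℝ^{n_y+1}. Let V_y: ℝ^{n_y} → ℝ≥0 be a C¹ proper positive definite function and α_y: ℝ^{n_y} → ℝ a C¹ function with α_y(0) = 0 such that ∇V_y(y)·(h₁(y) + h₂(y)α_y(y)) < 0 for all y ≠ 0, and let P₂₂ > 0. Define V(y,x) := V_y(y) + P₂₂(x − α_y(y))². Then V is proper and positive definite on ℝ^{n_y+1}, ∇V(y,x)·b(y,x) = 2P₂₂(x − α_y(y))g(y,x), and for every (y,x) ≠ (0,0), ∇V(y,x)·b(y,x) = 0 implies ∇V(y,x)·a(y,x)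 < 0. -/
open Matrix Filter Topology Asymptotics

noncomputable section

/-- The backstepping Lyapunov function
`V(y,x) := V_y(y) + P₂₂ (x − α_y(y))²` is proper and positive definite, its derivative
along the input vector field `b(y,x) = (0, g(y,x))` equals `2P₂₂ (x − α_y(y)) g(y,x)`,
and it satisfies the Artstein condition for the strict-feedback system. -/
theorem stmt14 {ny : ℕ}
    (h₁ : (Fin ny → ℝ) → (Fin ny → ℝ)) (h₂ : (Fin ny → ℝ) → (Fin ny → ℝ))
    (f g : ((Fin ny → ℝ) × ℝ) → ℝ)
    (hh₁ : Continuous h₁) (hh₂ : Continuous h₂)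
    (hf : Continuous f) (hg : Continuous g) (hgne : ∀ z, g z ≠ 0)
    (Vy : (Fin ny → ℝ) → ℝ)
    (hVy : ContDiff ℝ 1 Vy) (hVynonneg : ∀ y, 0 ≤ Vy y)
    (hVyproper : IsProper Vy) (hVypos : IsPosDefFn Vy)
    (αy : (Fin ny → ℝ) → ℝ) (hαy : ContDiff ℝ 1 αy) (hαy0 : αy 0 = 0)
    (hdec : ∀ y : Fin ny → ℝ, y ≠ 0 →
      fderiv ℝ Vy y (h₁ y + αy y • h₂ y) < 0)
    (P₂₂ : ℝ) (hP₂₂ : 0 < P₂₂)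
    (V : ((Fin ny → ℝ) × ℝ) → ℝ)
    (hVdef : V = fun z => Vy z.1 + P₂₂ * (z.2 - αy z.1) ^ 2) :
    IsProper V ∧ IsPosDefFn V ∧
    (∀ z : (Fin ny → ℝ) × ℝ,
      fderiv ℝ V z ((0 : Fin ny → ℝ), g z) = 2 * P₂₂ * (z.2 - αy z.1) * g z) ∧
    (∀ z : (Fin ny → ℝ) × ℝ, z ≠ 0 →
      fderiv ℝ V z ((0 : Fin ny → ℝ), g z) = 0 →
      fderiv ℝ V z (h₁ z.1 + z.2 • h₂ z.1, f z) < 0) := by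
  have hD : ∀ z : (Fin ny → ℝ) × ℝ, ∀ w : (Fin ny → ℝ) × ℝ,
      fderiv ℝ V z w = fderiv ℝ Vy z.1 w.1
        + P₂₂ * (2 * (z.2 - αy z.1) * (w.2 - fderiv ℝ αy z.1 w.1)) := by
    intro z w
    have e1 : HasFDerivAt (fun z : (Fin ny → ℝ) × ℝ => Vy z.1)
        ((fderiv ℝ Vy z.1).comp (ContinuousLinearMap.fst ℝ (Fin ny → ℝ) ℝ)) z :=
      HasFDerivAt.comp z ((hVy.differentiable one_ne_zero) z.1).hasFDerivAt hasFDerivAt_fst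
    have e2 : HasFDerivAt (fun z : (Fin ny → ℝ) × ℝ => αy z.1)
        ((fderiv ℝ αy z.1).comp (ContinuousLinearMap.fst ℝ (Fin ny → ℝ) ℝ)) z :=
      HasFDerivAt.comp z ((hαy.differentiable one_ne_zero) z.1).hasFDerivAt hasFDerivAt_fst
    have e3 : HasFDerivAt (fun z : (Fin ny → ℝ) × ℝ => z.2)
        (ContinuousLinearMap.snd ℝ (Fin ny → ℝ) ℝ) z := hasFDerivAt_snd
    have e4 := e1.add (((e3.sub e2).pow 2).const_mul P₂₂)
    rw [hVdef]
    refine (congrArg (fun L => L w) e4.fderiv).trans ?_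
    simp
  have hB : ∀ z : (Fin ny → ℝ) × ℝ,
      fderiv ℝ V z ((0 : Fin ny → ℝ), g z) = 2 * P₂₂ * (z.2 - αy z.1) * g z := by
    intro z
    rw [hD]
    simp
    ring
  refine ⟨?_, ⟨?_, ?_⟩, hB, ?_⟩
  · unfold IsProper at *
    rw [tendsto_atTop]
    intro c
    have hb : Bornology.IsBounded {y | ¬ (c ≤ Vy y)} := by
      have := (tendsto_atTop.1 hVyproper) c
      rw [Filter.Eventually, ← Bornology.isCobounded_def, ← Bornology.isBounded_compl_iff] at this
      exact this
    have hc : IsCompact (closure {y | ¬ (c ≤ Vy y)}) := hb.isCompact_closure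
    obtain ⟨M, hM⟩ := hc.exists_bound_of_continuousOn hαy.continuous.continuousOn
    have hb2 : Bornology.IsBounded
        ({y | ¬ (c ≤ Vy y)} ×ˢ Metric.closedBall (0:ℝ) (M + (c / P₂₂ + 1))) :=
      hb.prod Metric.isBounded_closedBall
    rw [Filter.Eventually, ← Bornology.isCobounded_def, ← Bornology.isBounded_compl_iff]
    refine hb2.subset ?_
    rintro ⟨y, x⟩ h
    simp only [hVdef, Set.mem_compl_iff, Set.mem_setOf_eq, not_le] at h
    have hsq := mul_nonneg hP₂₂.le (sq_nonneg (x - αy y))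
    have hy : y ∈ {y | ¬ (c ≤ Vy y)} := by
      simp only [Set.mem_setOf_eq, not_le]; linarith
    refine ⟨hy, ?_⟩
    have h1 := hM y (subset_closure hy)
    have h2 : (x - αy y) ^ 2 ≤ c / P₂₂ := by
      rw [le_div_iff₀ hP₂₂]
      nlinarith [hVynonneg y]
    have h3 : |x - αy y| ≤ c / P₂₂ + 1 := by
      rw [← sq_abs] at h2
      nlinarith [sq_nonneg (|x - αy y| - 1), abs_nonneg (x - αy y)]
    rw [Real.norm_eq_abs] at h1
    simp only [Metric.mem_closedBall, dist_zero_right, Real.norm_eq_abs]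
    have h4 : |x| ≤ |αy y| + |x - αy y| := by
      have := abs_add_le (αy y) (x - αy y)
      simpa using this
    linarith
  · simp [hVdef, hVypos.1, hαy0]
  · rintro ⟨y, x⟩ hz
    rw [hVdef]
    by_cases hy : y = 0
    · subst hy
      have hx : x ≠ 0 := by
        rintro rfl
        exact hz rfl
      simp only [hVypos.1, hαy0]
      have : 0 < x ^ 2 := by positivity
      simpa using mul_pos hP₂₂ this
    · have := hVypos.2 y hy
      have := mul_nonneg hP₂₂.le (sq_nonneg (x - αy y))
      simp only
      linarith
  · rintro ⟨y, x⟩ hz h0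
    rw [hB] at h0
    have hx : x - αy y = 0 := by
      simpa [hP₂₂.ne', hgne] using h0
    have hx' : x = αy y := by linarith
    have hy : y ≠ 0 := by
      rintro rfl
      rw [hαy0] at hx'
      subst hx'
      exact hz rfl
    rw [hD]
    simp only [hx, mul_zero, zero_mul, add_zero]
    rw [hx']
    exact hdec y hy
end
end

section
/- Let P₁₁ ∈ ℝ^{n_y×n_y}, P₁₂ ∈ ℝ^{n_y×1}, and P₂₂ > 0, and set P_y := P₁₁ − P₁₂P₂₂⁻¹P₁₂ᵀ. Let V_y: ℝ^{n_y} → ℝ satisfy V_y(y) = yᵀP_y y + o(|y|²) as y → 0, and let α_y: ℝ^{n_y} → ℝ be differentiable at 0 with α_y(0) = 0 and Dα_y(0) = −P₂₂⁻¹P₁₂ᵀ. Then the function V(y,x) := V_y(y) + P₂₂(x − α_y(y))² satisfies V(χ) = χᵀPχ + o(|χ|²) as χ = (y,x) → 0, where P is the block matrix [[P₁₁, P₁₂],[P₁₂ᵀ, P₂₂]]. -/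
open Matrix Filter Topology Asymptotics

noncomputable section

/-- If `V_y(y) = yᵀP_y y + o(‖y‖²)` with `P_y` the Schur complement
`P₁₁ − P₁₂P₂₂⁻¹P₁₂ᵀ`, and `α_y` is differentiable at `0` with `α_y(0) = 0` and
`Dα_y(0) = −P₂₂⁻¹P₁₂ᵀ`, then `V(y,x) := V_y(y) + P₂₂(x − α_y(y))²` satisfies
`V(χ) = χᵀPχ + o(‖χ‖²)` for the block matrix `P = [[P₁₁,P₁₂],[P₁₂ᵀ,P₂₂]]`. -/
theorem stmt15 {ny : ℕ}
    (P₁₁ : Matrix (Fin ny) (Fin ny) ℝ) (P₁₂ : Fin ny → ℝ) (P₂₂ : ℝ) (hP₂₂ : 0 < P₂₂)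
    (P : Matrix (Fin ny ⊕ Fin 1) (Fin ny ⊕ Fin 1) ℝ)
    (hP : P = Matrix.fromBlocks P₁₁ (Matrix.of fun i _ => P₁₂ i)
        (Matrix.of fun _ j => P₁₂ j) (Matrix.of fun _ _ => P₂₂))
    (Vy : (Fin ny → ℝ) → ℝ)
    (hVy : (fun y => Vy y - y ⬝ᵥ (P₁₁ - P₂₂⁻¹ • Matrix.vecMulVec P₁₂ P₁₂).mulVec y)
      =o[nhds (0 : Fin ny → ℝ)] (fun y => ‖y‖ ^ 2))
    (αy : (Fin ny → ℝ) → ℝ)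
    (hαy_diff : DifferentiableAt ℝ αy 0) (hαy0 : αy 0 = 0)
    (hDαy : ∀ v, fderiv ℝ αy 0 v = -(P₁₂ ⬝ᵥ v) / P₂₂) :
    (fun z : (Fin ny → ℝ) × ℝ =>
        (Vy z.1 + P₂₂ * (z.2 - αy z.1) ^ 2)
          - (Sum.elim z.1 fun _ => z.2) ⬝ᵥ P.mulVec (Sum.elim z.1 fun _ => z.2))
      =o[nhds (0 : (Fin ny → ℝ) × ℝ)] (fun z => ‖z‖ ^ 2) := by
  subst hP
  have hne : P₂₂ ≠ 0 := hP₂₂.ne'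
  have hr : (fun y => αy y - fderiv ℝ αy 0 y) =o[nhds (0 : Fin ny → ℝ)] (fun y => y) := by
    have h := hαy_diff.hasFDerivAt.isLittleO
    simpa [hαy0] using h
  have hfst : Tendsto (fun z : (Fin ny → ℝ) × ℝ => z.1) (nhds 0) (nhds 0) :=
    (continuous_fst.tendsto (0 : (Fin ny → ℝ) × ℝ))
  have hO1 : (fun z : (Fin ny → ℝ) × ℝ => z.1) =O[nhds 0] (fun z => ‖z‖) :=
    (isBigO_of_le _ fun z => by simpa using norm_fst_le z)
  have hO2 : (fun z : (Fin ny → ℝ) × ℝ => z.2) =O[nhds 0] (fun z => ‖z‖) :=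
    (isBigO_of_le _ fun z => by simpa using norm_snd_le z)
  have hr' : (fun z : (Fin ny → ℝ) × ℝ => αy z.1 - fderiv ℝ αy 0 z.1) =o[nhds 0]
      (fun z => ‖z‖) := (hr.comp_tendsto hfst).trans_isBigO hO1
  have hV' : (fun z : (Fin ny → ℝ) × ℝ =>
      Vy z.1 - z.1 ⬝ᵥ (P₁₁ - P₂₂⁻¹ • Matrix.vecMulVec P₁₂ P₁₂).mulVec z.1) =o[nhds 0]
      (fun z => ‖z‖ ^ 2) := (hVy.comp_tendsto hfst).trans_isBigO (hO1.norm_left.pow 2)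
  have hL : (fun z : (Fin ny → ℝ) × ℝ => fderiv ℝ αy 0 z.1) =O[nhds 0] (fun z => ‖z‖) :=
    ((fderiv ℝ αy 0).isBigO_comp (fun z : (Fin ny → ℝ) × ℝ => z.1) (nhds 0)).trans hO1
  have hq := hr'.isBigO.sub ((hO2.sub hL).const_mul_left 2)
  have hprod := (hr'.mul_isBigO hq).const_mul_left P₂₂
  have hprod' := hprod.congr_right (g₂ := fun z => ‖z‖ ^ 2) (fun z => by ring)
  refine (hV'.add hprod').congr_left fun z => ?_
  obtain ⟨y, x⟩ := z
  have e1 : y ⬝ᵥ (P₁₁ - P₂₂⁻¹ • Matrix.vecMulVec P₁₂ P₁₂).mulVec y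
      = y ⬝ᵥ P₁₁.mulVec y - P₂₂⁻¹ * (P₁₂ ⬝ᵥ y) ^ 2 := by
    rw [Matrix.sub_mulVec, dotProduct_sub, Matrix.smul_mulVec, dotProduct_smul,
      Matrix.vecMulVec_mulVec]
    simp [dotProduct_smul, dotProduct_comm y P₁₂]
    left
    ring
  have e2 : (Sum.elim y fun _ : Fin 1 => x) ⬝ᵥ (Matrix.fromBlocks P₁₁
        (Matrix.of fun i _ => P₁₂ i)
        (Matrix.of fun _ j => P₁₂ j) (Matrix.of fun _ _ => P₂₂)).mulVec
        (Sum.elim y fun _ : Fin 1 => x)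
      = y ⬝ᵥ P₁₁.mulVec y + 2 * x * (P₁₂ ⬝ᵥ y) + P₂₂ * x ^ 2 := by
    have e3 : (Matrix.of fun (i : Fin ny) (_ : Fin 1) => P₁₂ i).mulVec (fun _ => x)
        = x • P₁₂ := by
      ext i; simp [Matrix.mulVec, dotProduct, mul_comm]
    have e4 : (Matrix.of fun (_ : Fin 1) (j : Fin ny) => P₁₂ j).mulVec y
        = fun _ => P₁₂ ⬝ᵥ y := by
      ext i; simp [Matrix.mulVec, dotProduct]
    have e5 : (Matrix.of fun (_ : Fin 1) (_ : Fin 1) => P₂₂).mulVec (fun _ => x)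
        = fun _ => P₂₂ * x := by
      ext i; simp [Matrix.mulVec, dotProduct]
    rw [Matrix.fromBlocks_mulVec, sumElim_dotProduct_sumElim]
    simp only [Sum.elim_comp_inl, Sum.elim_comp_inr, e3, e4, e5, dotProduct_add,
      dotProduct_smul, dotProduct_comm y P₁₂, smul_eq_mul]
    simp [dotProduct]
    ring
  simp only [e1, e2, hDαy]
  field_simp
  ring
end
end

section
/- Let a: ℝ^n → ℝ^n be C¹ with a(0) = 0 and A := Da(0), let b: ℝ^n → ℝ^{n×p} be C¹ with B := b(0), and let K ∈ ℝ^{p×n} be such that A + BK is Hurwitz. Let α₀: ℝ^n → ℝ^p be locally Lipschitz, differentiable at 0, with α₀(0) = 0 and Dα₀(0) = K, and suppose the origin of dχ/dt = a(χ) + b(χ)α₀(χ) is globally asymptotically stable. Then for every positive definite matrix P ∈ ℝ^{n×n} with (A+BK)ᵀP + P(A+BK) negative definite, there exist a C² proper positive definite function V: ℝ^n → ℝ≥0 and ε₂ > 0 such that V(χ) = χᵀPχ for all |χ| ≤ ε₂ (hence H(V)(0) = 2P) and ∇V(χ)·(a(χ) + b(χ)α₀(χ)) < 0 for all χ ≠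 0. -/
open Matrix Filter Topology Asymptotics

noncomputable section

theorem param_hasFDerivAt {P E G : Type} [NormedAddCommGroup P] [NormedSpace ℝ P]
    [NormedAddCommGroup E] [NormedSpace ℝ E] [ProperSpace E]
    [NormedAddCommGroup G] [NormedSpace ℝ G]
    (f : P × E → G) (hf : ContDiff ℝ 1 f) (γ : ℝ → P) (hγ : Continuous γ) (T : ℝ) (y : E) :
    HasFDerivAt (fun y => ∫ t in (0:ℝ)..T, f (γ t, y))
      (∫ t in (0:ℝ)..T, (fderiv ℝ f (γ t, y)).comp (ContinuousLinearMap.inr ℝ P E)) y := by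
  have hc' : Continuous (fun q : ℝ × E => (fderiv ℝ f (γ q.1, q.2)).comp
      (ContinuousLinearMap.inr ℝ P E)) := by
    have h1 : Continuous (fun q : ℝ × E => fderiv ℝ f (γ q.1, q.2)) :=
      (hf.continuous_fderiv one_ne_zero).comp (by fun_prop)
    exact h1.clm_comp continuous_const
  have hcf := hf.continuous
  obtain ⟨C, hC⟩ := (isCompact_uIcc (a := (0:ℝ)) (b := T)).prod (isCompact_closedBall y 1)
    |>.exists_bound_of_continuousOn hc'.continuousOn
  refine intervalIntegral.hasFDerivAt_integral_of_dominated_of_fderiv_le (𝕜 := ℝ)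
    (F := fun y t => f (γ t, y))
    (F' := fun y t => (fderiv ℝ f (γ t, y)).comp (ContinuousLinearMap.inr ℝ P E))
    (bound := fun _ => C) (Metric.ball_mem_nhds y one_pos) ?_ ?_ ?_ ?_ ?_ ?_
  · exact Eventually.of_forall fun x =>
      (Continuous.aestronglyMeasurable (by fun_prop))
  · exact Continuous.intervalIntegrable (by fun_prop) _ _
  · have : Continuous fun t => (fderiv ℝ f (γ t, y)).comp (ContinuousLinearMap.inr ℝ P E) :=
      hc'.comp (by fun_prop : Continuous fun t : ℝ => (t, y))
    exact this.aestronglyMeasurable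
  · refine Eventually.of_forall fun t ht x hx => ?_
    exact hC (t, x) ⟨Set.uIoc_subset_uIcc ht, Metric.ball_subset_closedBall hx⟩
  · exact intervalIntegrable_const
  · refine Eventually.of_forall fun t ht x hx => ?_
    exact ((hf.differentiable one_ne_zero) (γ t, x)).hasFDerivAt.comp x
      (hasFDerivAt_prodMk_right (γ t) x)

theorem param_continuous {P E G : Type} [NormedAddCommGroup P] [NormedSpace ℝ P]
    [NormedAddCommGroup E] [NormedSpace ℝ E] [ProperSpace E]
    [NormedAddCommGroup G] [NormedSpace ℝ G]
    (f : P × E → G) (hf : Continuous f) (γ : ℝ → P) (hγ : Continuous γ) (T : ℝ) :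
    Continuous (fun y => ∫ t in (0:ℝ)..T, f (γ t, y)) := by
  refine intervalIntegral.continuous_parametric_intervalIntegral_of_continuous' ?_ _ _
  simp only [Function.uncurry_def]
  fun_prop

theorem param_contDiff_one {P E G : Type} [NormedAddCommGroup P] [NormedSpace ℝ P]
    [NormedAddCommGroup E] [NormedSpace ℝ E] [ProperSpace E]
    [NormedAddCommGroup G] [NormedSpace ℝ G]
    (f : P × E → G) (hf : ContDiff ℝ 1 f) (γ : ℝ → P) (hγ : Continuous γ) (T : ℝ) :
    ContDiff ℝ 1 (fun y => ∫ t in (0:ℝ)..T, f (γ t, y)) := by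
  rw [contDiff_one_iff_hasFDerivAt]
  refine ⟨_, ?_, param_hasFDerivAt f hf γ hγ T⟩
  refine param_continuous (fun q : P × E => (fderiv ℝ f q).comp (ContinuousLinearMap.inr ℝ P E))
    ?_ γ hγ T
  exact (hf.continuous_fderiv one_ne_zero).clm_comp continuous_const

theorem param_contDiff_two {P E G : Type} [NormedAddCommGroup P] [NormedSpace ℝ P]
    [NormedAddCommGroup E] [NormedSpace ℝ E] [ProperSpace E]
    [NormedAddCommGroup G] [NormedSpace ℝ G]
    (f : P × E → G) (hf : ContDiff ℝ 2 f) (γ : ℝ → P) (hγ : Continuous γ) (T : ℝ) :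
    ContDiff ℝ 2 (fun y => ∫ t in (0:ℝ)..T, f (γ t, y)) := by
  have h1 : ContDiff ℝ 1 f := hf.of_le (by norm_num)
  have h2 : ContDiff ℝ ((1:ℕ) + 1 : WithTop ℕ∞) (fun y => ∫ t in (0:ℝ)..T, f (γ t, y)) := by
    rw [contDiff_succ_iff_hasFDerivAt]
    refine ⟨_, ?_, param_hasFDerivAt f h1 γ hγ T⟩
    refine param_contDiff_one
      (fun q : P × E => (fderiv ℝ f q).comp (ContinuousLinearMap.inr ℝ P E)) ?_ γ hγ T
    exact (hf.fderiv_right (m := 1) (by norm_num)).clm_comp contDiff_const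
  convert h2 using 1
  norm_num

theorem st_deriv_nonneg (s : ℝ) : 0 ≤ deriv Real.smoothTransition s :=
  Real.smoothTransition.monotone.deriv_nonneg

theorem st_deriv_neg (s : ℝ) (hs : s < 0) : deriv Real.smoothTransition s = 0 := by
  have : Real.smoothTransition =ᶠ[𝓝 s] fun _ => 0 := by
    filter_upwards [Iio_mem_nhds hs] with z hz
    exact Real.smoothTransition.zero_of_nonpos (le_of_lt hz)
  rw [this.deriv_eq]; simp

theorem st_hasDerivAt (s : ℝ) :
    HasDerivAt Real.smoothTransition (deriv Real.smoothTransition s) s :=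
  ((Real.smoothTransition.contDiff (n := 1)).differentiable (by simp) s).hasDerivAt

theorem tube {E : Type} [NormedAddCommGroup E] [InnerProductSpace ℝ E] [FiniteDimensional ℝ E]
    (F : E → E) (hF : LocallyLipschitz F) (U : Set E) (hUo : IsOpen U) (hU0 : (0:E) ∈ U)
    (χ : ℝ → E) (hχ : ∀ t : ℝ, 0 ≤ t → HasDerivAt χ (F (χ t)) t)
    (hlim : Tendsto χ atTop (𝓝 0)) :
    ∃ v : E → ℝ, ContDiff ℝ 2 v ∧ HasCompactSupport v ∧ (∀ y, 0 ≤ v y) ∧ 0 < v (χ 0) ∧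
      (∀ y, y ∉ U → 0 ≤ fderiv ℝ v y (F y)) ∧ (χ 0 ∉ U → 0 < fderiv ℝ v (χ 0) (F (χ 0))) := by
  obtain ⟨T, hTU, hT⟩ : ∃ T, χ T ∈ U ∧ 0 < T :=
    ((hlim.eventually (hUo.mem_nhds hU0)).and (eventually_gt_atTop 0)).exists
  obtain ⟨ρ, hρ, hρU⟩ := Metric.isOpen_iff.1 hUo _ hTU
  have hχc : ContinuousOn χ (Set.Ici 0) := fun t ht => (hχ t ht).continuousAt.continuousWithinAt
  obtain ⟨R, hR⟩ := (isCompact_Icc (a := (0:ℝ)) (b := T)).exists_bound_of_continuousOn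
    (hχc.mono Set.Icc_subset_Ici_self)
  obtain ⟨K, hK⟩ := LocallyLipschitzOn.exists_lipschitzOnWith_of_compact
    (isCompact_closedBall (0:E) (R+1)) (hF.locallyLipschitzOn (s := Metric.closedBall (0:E) (R+1)))
  obtain ⟨r, hr, hr1⟩ : ∃ r : ℝ, 0 < r ∧ r * Real.exp (K * T) = min 1 ρ :=
    ⟨min 1 ρ * Real.exp (-(K*T)), by positivity, by
      rw [mul_assoc, ← Real.exp_add]; simp⟩
  set c : ℝ → ℝ := fun t => Real.exp (-(2 * K * t)) / r^2 with hc
  have hcpos : ∀ t, 0 < c t := fun t => by positivity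
  set γ : ℝ → ℝ × E := fun t => (c t, χ (max 0 t)) with hγdef
  have hγ : Continuous γ := by
    have h1 : Continuous fun t => χ (max 0 t) :=
      hχc.comp_continuous (by fun_prop) (fun t => by simp)
    have h2 : Continuous c := by fun_prop
    exact h2.prodMk h1
  set β : ℝ → ℝ := fun s => Real.smoothTransition (1 - s) with hβ
  have hβd : ∀ s, HasDerivAt β (-deriv Real.smoothTransition (1 - s)) s := fun s => by
    have := (st_hasDerivAt (1 - s)).comp s ((hasDerivAt_id s).const_sub 1)
    simpa [hβ, Function.comp_def] using this
  set f : (ℝ × E) × E → ℝ := fun q => β (q.1.1 * ‖q.2 - q.1.2‖^2) with hfdef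
  have hf : ContDiff ℝ 2 f := by
    have h0 : ContDiff ℝ 2 Real.smoothTransition := Real.smoothTransition.contDiff (n := 2)
    have h1 : ContDiff ℝ 2 fun q : (ℝ × E) × E => ‖q.2 - q.1.2‖^2 :=
      ContDiff.norm_sq ℝ (by fun_prop)
    have h2 : ContDiff ℝ 2 fun q : (ℝ × E) × E => 1 - q.1.1 * ‖q.2 - q.1.2‖^2 :=
      contDiff_const.sub (ContDiff.mul (by fun_prop) h1)
    exact h0.comp h2
  have hf1 : ContDiff ℝ 1 f := hf.of_le (by norm_num)
  -- tube estimate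
  have key : ∀ t ∈ Set.Icc 0 T, ∀ y, c t * ‖y - χ t‖^2 ≤ 1 → ‖y - χ t‖ ≤ min 1 ρ := by
    intro t ht y hy
    rw [← hr1]
    have h1 : ‖y - χ t‖^2 ≤ (r * Real.exp (K * t))^2 := by
      have : c t * (r * Real.exp (K * t))^2 = 1 := by
        have h3 : Real.exp (K*t)^2 = Real.exp (2*K*t) := by rw [← Real.exp_nat_mul]; ring_nf
        rw [mul_pow, h3, hc]
        simp only [Real.exp_neg]
        field_simp
      rw [← this] at hy
      exact le_of_mul_le_mul_left hy (hcpos t)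
    have h2 := abs_le_of_sq_le_sq' h1 (by positivity)
    refine h2.2.trans ?_
    have : (K:ℝ) * t ≤ K * T := mul_le_mul_of_nonneg_left ht.2 K.2
    gcongr
  set v : E → ℝ := fun y => ∫ t in (0:ℝ)..T, f (γ t, y) with hv
  have hγt : ∀ t ∈ Set.Icc 0 T, γ t = (c t, χ t) := fun t ht => by simp [hγdef, ht.1]
  have hfn : ∀ q, 0 ≤ f q := fun q => Real.smoothTransition.nonneg _
  have hfc : ∀ y, Continuous fun t => f (γ t, y) := fun y => by
    have := hf.continuous
    fun_prop
  -- derivative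
  have hDf : ∀ t y w, (fderiv ℝ f (γ t, y)) (0, w) =
      (-deriv Real.smoothTransition (1 - (γ t).1 * ‖y - (γ t).2‖^2)) *
        ((γ t).1 * (2 * inner ℝ (y - (γ t).2) w)) := by
    intro t y w
    have h1 : HasFDerivAt (fun y => f (γ t, y))
      ((fderiv ℝ f (γ t, y)).comp (ContinuousLinearMap.inr ℝ (ℝ × E) E)) y :=
      ((hf1.differentiable one_ne_zero) (γ t, y)).hasFDerivAt.comp y
      (hasFDerivAt_prodMk_right (γ t) y)
    have h2 : HasFDerivAt (fun y => ‖y - (γ t).2‖^2) _ y :=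
      ((hasFDerivAt_id y).sub_const (γ t).2).norm_sq
    have h3 := (hβd ((γ t).1 * ‖y - (γ t).2‖^2)).comp_hasFDerivAt y (h2.const_mul (γ t).1)
    have h4 := congrArg (fun L => L w) (h1.unique h3)
    simpa [two_mul, mul_add, inner_sub_left] using h4
  have hvd : ∀ y w, fderiv ℝ v y w = ∫ t in (0:ℝ)..T, (fderiv ℝ f (γ t, y)) (0, w) := by
    intro y w
    rw [(param_hasFDerivAt f hf1 γ hγ T y).fderiv]
    have hi : IntervalIntegrable (fun t => (fderiv ℝ f (γ t, y)).comp
        (ContinuousLinearMap.inr ℝ (ℝ × E) E)) MeasureTheory.volume 0 T := by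
      apply Continuous.intervalIntegrable
      have h1 : Continuous (fun t => fderiv ℝ f (γ t, y)) :=
        (hf1.continuous_fderiv one_ne_zero).comp (by fun_prop)
      exact h1.clm_comp continuous_const
    rw [ContinuousLinearMap.intervalIntegral_apply hi]
    simp
  have hlow : ∀ y, f (γ 0, y) - f (γ T, y) ≤ fderiv ℝ v y (F y) := by
    intro y
    rw [hvd]
    have hg : ∀ t ∈ Set.Icc 0 T, HasDerivAt (fun t => -β (c t * ‖y - χ t‖^2))
        (-(-deriv Real.smoothTransition (1 - c t * ‖y - χ t‖^2) *
          (c t * (-(2 * K)) * ‖y - χ t‖^2 + c t * (2 * inner ℝ (y - χ t) (-F (χ t)))))) t := by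
      intro t ht
      have h1 : HasDerivAt (fun t => ‖y - χ t‖^2) (2 * inner ℝ (y - χ t) (-F (χ t))) t :=
        ((hχ t ht.1).const_sub y).norm_sq
      have h2 : HasDerivAt c (c t * (-(2*K))) t := by
        have := ((((hasDerivAt_id t).const_mul (2 * (K:ℝ))).neg).exp).div_const (r^2)
        refine HasDerivAt.congr_deriv (f := c) this ?_
        simp only [hc, id, Pi.neg_apply]; ring
      exact ((hβd _).comp t (h2.mul h1)).neg
    have := intervalIntegral.sub_le_integral_of_hasDeriv_right_of_le (a := 0) (b := T)
      (g := fun t => -β (c t * ‖y - χ t‖^2))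
      (φ := fun t => (fderiv ℝ f (γ t, y)) (0, F y)) hT.le
      (fun t ht => (hg t ht).continuousAt.continuousWithinAt)
      (fun t ht => (hg t ⟨ht.1.le, ht.2.le⟩).hasDerivWithinAt) ?_ ?_
    · rw [hγt 0 ⟨le_rfl, hT.le⟩, hγt T ⟨hT.le, le_rfl⟩]
      simp only [hfdef]
      linarith
    · apply Continuous.integrableOn_Icc
      have h1 : Continuous (fun t => fderiv ℝ f (γ t, y)) :=
        (hf1.continuous_fderiv one_ne_zero).comp (by fun_prop)
      exact h1.clm_apply continuous_const
    · intro t ht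
      have ht' : t ∈ Set.Icc 0 T := ⟨ht.1.le, ht.2.le⟩
      rw [hDf, hγt t ht']
      simp only
      rcases le_or_gt (c t * ‖y - χ t‖^2) 1 with h | h
      · have h1 := key t ht' y h
        have hχb := hR t ht'
        have hyb : ‖y‖ ≤ R + 1 := by
          have := norm_add_le (y - χ t) (χ t)
          rw [sub_add_cancel] at this
          have h2 := min_le_left 1 ρ
          linarith
        have hl := hK.dist_le_mul y (by simpa using hyb) (χ t) (by simp; linarith)
        rw [dist_eq_norm, dist_eq_norm] at hl
        have hin : inner ℝ (y - χ t) (F y - F (χ t)) ≤ K * ‖y - χ t‖^2 := by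
          refine (real_inner_le_norm _ _).trans ?_
          nlinarith [norm_nonneg (y - χ t)]
        have hd := st_deriv_nonneg (1 - c t * ‖y - χ t‖^2)
        have hcp := hcpos t
        rw [inner_sub_right] at hin
        rw [inner_neg_right]
        have := mul_nonneg (mul_nonneg hd hcp.le) (sub_nonneg.2 hin)
        nlinarith
      · rw [st_deriv_neg _ (by linarith)]; simp
  have hout : ∀ y, y ∉ U → f (γ T, y) = 0 := by
    intro y hy
    rw [hγt T ⟨hT.le, le_rfl⟩]
    apply Real.smoothTransition.zero_of_nonpos
    simp only
    by_contra hcon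
    push Not at hcon
    have h1 : c T * ‖y - χ T‖^2 < 1 := by linarith
    apply hy
    -- need strictness
    apply hρU
    rw [Metric.mem_ball, dist_eq_norm]
    refine lt_of_le_of_ne ((key T ⟨hT.le, le_rfl⟩ y h1.le).trans (min_le_right _ _)) ?_
    intro heq
    have h2 : min 1 ρ ≤ ‖y - χ T‖ := by rw [heq]; exact min_le_right _ _
    rw [← hr1] at h2
    have h3 : (r * Real.exp (K * T))^2 ≤ ‖y - χ T‖^2 := by gcongr
    have : c T * (r * Real.exp (K * T))^2 = 1 := by
      have h3 : Real.exp (K*T)^2 = Real.exp (2*K*T) := by rw [← Real.exp_nat_mul]; ring_nf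
      rw [mul_pow, h3, hc]
      simp only [Real.exp_neg]
      field_simp
    have h4 := mul_le_mul_of_nonneg_left h3 (hcpos T).le
    linarith
  have hx0 : f (γ 0, χ 0) = 1 := by
    rw [hγt 0 ⟨le_rfl, hT.le⟩]
    simp [hfdef, hβ]
  refine ⟨v, param_contDiff_two f hf γ hγ T, ?_, ?_, ?_, ?_, ?_⟩
  · refine HasCompactSupport.of_support_subset_isCompact (isCompact_closedBall (0:E) (R+1)) ?_
    intro y hy
    by_contra hcon
    apply hy
    have : ∀ t ∈ Set.uIcc 0 T, f (γ t, y) = 0 := by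
      intro t ht
      rw [Set.uIcc_of_le hT.le] at ht
      rw [hγt t ht]
      apply Real.smoothTransition.zero_of_nonpos
      simp only
      by_contra hcon2
      push Not at hcon2
      have h1 := key t ht y (by linarith)
      apply hcon
      have hχb := hR t ht
      have := norm_add_le (y - χ t) (χ t)
      rw [sub_add_cancel] at this
      have h2 := min_le_left 1 ρ
      simp
      linarith
    rw [hv]
    simp only
    rw [intervalIntegral.integral_congr this]
    simp
  · intro y
    exact intervalIntegral.integral_nonneg hT.le fun t _ => hfn _
  · exact intervalIntegral.integral_pos hT (hfc _).continuousOn (fun t _ => hfn _)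
      ⟨0, ⟨le_rfl, hT.le⟩, by rw [hx0]; norm_num⟩
  · intro y hy
    have := hlow y
    rw [hout y hy] at this
    linarith [hfn (γ 0, y)]
  · intro hy
    have := hlow (χ 0)
    rw [hout _ hy, hx0] at this
    linarith

theorem exists_W {E : Type} [NormedAddCommGroup E] [InnerProductSpace ℝ E]
    [FiniteDimensional ℝ E]
    (F : E → E) (hF : LocallyLipschitz F) (U : Set E) (hUo : IsOpen U) (hU0 : (0:E) ∈ U)
    (hsol : ∀ x₀ : E, ∃ χ : ℝ → E, χ 0 = x₀ ∧ (∀ t : ℝ, 0 ≤ t → HasDerivAt χ (F (χ t)) t) ∧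
      Tendsto χ atTop (𝓝 0)) :
    ∃ W : E → ℝ, ContDiff ℝ 2 W ∧ (∀ x, 0 < W x) ∧ Tendsto W (Bornology.cobounded E) atTop ∧
      ∀ y, y ∉ U → fderiv ℝ W y (F y) < 0 := by
  have htube : ∀ x : E, ∃ v : E → ℝ, ContDiff ℝ 2 v ∧ HasCompactSupport v ∧ (∀ y, 0 ≤ v y) ∧
      0 < v x ∧ (∀ y, y ∉ U → 0 ≤ fderiv ℝ v y (F y)) ∧ (x ∉ U → 0 < fderiv ℝ v x (F x)) := by
    intro x
    obtain ⟨χ, rfl, h1, h2⟩ := hsol x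
    exact tube F hF U hUo hU0 χ h1 h2
  choose v hvC hvS hvn hvp hvU hvx using htube
  have hnhds : ∀ x : E, {y | 0 < v x y ∧ (y ∈ U ∨ 0 < fderiv ℝ (v x) y (F y))} ∈ 𝓝 x := by
    intro x
    have hc : Continuous fun y => fderiv ℝ (v x) y (F y) :=
      ((hvC x).continuous_fderiv (by norm_num)).clm_apply hF.continuous
    refine IsOpen.mem_nhds ?_ ?_
    · exact (isOpen_lt continuous_const (hvC x).continuous).inter
        (hUo.union (isOpen_lt continuous_const hc))
    · refine ⟨hvp x, ?_⟩
      by_cases h : x ∈ U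
      · exact Or.inl h
      · exact Or.inr (hvx x h)
  obtain ⟨S, hSc, hS⟩ := TopologicalSpace.countable_cover_nhds hnhds
  have hSne : S.Nonempty := by
    by_contra h
    rw [Set.not_nonempty_iff_eq_empty] at h
    subst h
    have h0 : (0:E) ∈ (Set.univ : Set E) := trivial
    rw [← hS] at h0
    simp at h0
  obtain ⟨e, rfl⟩ := hSc.exists_eq_range hSne
  -- bounds
  have hbd : ∀ i : ℕ, ∃ M : ℝ, 0 < M ∧ ∀ k : ℕ, k ≤ 2 → ∀ x, ‖iteratedFDeriv ℝ k (v (e i)) x‖ ≤ M := by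
    intro i
    have h1 : ∀ k : ℕ, ∃ M : ℝ, k ≤ 2 → ∀ x, ‖iteratedFDeriv ℝ k (v (e i)) x‖ ≤ M := by
      intro k
      by_cases hk : k ≤ 2
      · obtain ⟨M, hM⟩ := ((hvS (e i)).iteratedFDeriv (𝕜 := ℝ) k).exists_bound_of_continuous
          ((hvC (e i)).continuous_iteratedFDeriv (m := k) (by exact_mod_cast hk))
        exact ⟨M, fun _ => hM⟩
      · exact ⟨0, fun h => absurd h hk⟩
    choose M hM using h1
    refine ⟨1 + |M 0| + |M 1| + |M 2|, by positivity, ?_⟩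
    intro k hk x
    have := hM k hk x
    interval_cases k
    · linarith [le_abs_self (M 0), abs_nonneg (M 1), abs_nonneg (M 2)]
    · linarith [le_abs_self (M 1), abs_nonneg (M 0), abs_nonneg (M 2)]
    · linarith [le_abs_self (M 2), abs_nonneg (M 1), abs_nonneg (M 0)]
  choose M hMpos hM using hbd
  set c : ℕ → ℝ := fun i => (1/2)^i / M i with hc
  have hcpos : ∀ i, 0 < c i := fun i => div_pos (by positivity) (hMpos i)
  set g : ℕ → E → ℝ := fun i y => c i * v (e i) y with hg
  have hgC : ∀ i, ContDiff ℝ 2 (g i) := fun i => contDiff_const.mul (hvC (e i))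
  have hsum : Summable fun i : ℕ => ((1:ℝ)/2)^i := summable_geometric_two
  have hgb : ∀ (k : ℕ) (i : ℕ) (x : E), k ≤ 2 → ‖iteratedFDeriv ℝ k (g i) x‖ ≤ (1/2)^i := by
    intro k i x hk
    have h1 : g i = c i • v (e i) := by ext y; simp [hg]
    rw [h1, iteratedFDeriv_const_smul_apply, norm_smul]
    · have := hM i k hk x
      rw [Real.norm_of_nonneg (hcpos i).le]
      calc c i * _ ≤ c i * M i := by have := (hcpos i).le; gcongr
        _ = _ := by simp only [hc]; field_simp [(hMpos i).ne']
    · exact ((hvC (e i)).of_le (by exact_mod_cast hk)).contDiffAt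
  have hg0 : ∀ i x, ‖g i x‖ ≤ (1/2)^i := fun i x => by
    have := hgb 0 i x (by norm_num)
    rwa [norm_iteratedFDeriv_zero] at this
  have hg1 : ∀ i x, ‖fderiv ℝ (g i) x‖ ≤ (1/2)^i := fun i x => by
    have := hgb 1 i x (by norm_num)
    rwa [norm_iteratedFDeriv_one] at this
  have hsx : ∀ x, Summable fun i => g i x := fun x =>
    Summable.of_norm_bounded hsum fun i => hg0 i x
  set u : E → ℝ := fun x => ∑' i, g i x with hu
  have huC : ContDiff ℝ 2 u :=
    contDiff_tsum (N := 2) (v := fun _ i => (1/2)^i) hgC (fun _ _ => hsum)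
      (fun k i x hk => hgb k i x (by exact_mod_cast hk))
  have hcov : ∀ x, ∃ i, 0 < v (e i) x ∧ (x ∈ U ∨ 0 < fderiv ℝ (v (e i)) x (F x)) := by
    intro x
    have : x ∈ ⋃ z ∈ Set.range e, {y | 0 < v z y ∧ (y ∈ U ∨ 0 < fderiv ℝ (v z) y (F y))} := by
      rw [hS]; trivial
    simpa using this
  have hupos : ∀ x, 0 < u x := by
    intro x
    obtain ⟨i, hi, -⟩ := hcov x
    exact (hsx x).tsum_pos (fun j => mul_nonneg (hcpos j).le (hvn _ _)) i
      (mul_pos (hcpos i) hi)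
  have hud : ∀ x, fderiv ℝ u x = ∑' i, fderiv ℝ (g i) x := fun x =>
    fderiv_tsum_apply hsum (fun i => (hgC i).differentiable (by norm_num)) hg1 (hsx 0) x
  have hdg : ∀ i x w, fderiv ℝ (g i) x w = c i * fderiv ℝ (v (e i)) x w := by
    intro i x w
    rw [hg]
    simp only
    rw [fderiv_const_mul ((hvC (e i)).differentiable (by norm_num) x)]
    simp
  have hsd : ∀ x, Summable fun i => fderiv ℝ (g i) x := fun x =>
    Summable.of_norm_bounded hsum fun i => hg1 i x
  have hudU : ∀ y, y ∉ U → 0 < fderiv ℝ u y (F y) := by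
    intro y hy
    obtain ⟨i, -, hi⟩ := hcov y
    have hi := hi.resolve_left hy
    have hs : HasSum (fun i => fderiv ℝ (g i) y (F y)) (fderiv ℝ u y (F y)) := by
      rw [hud]
      exact ((hsd y).hasSum).mapL (ContinuousLinearMap.apply ℝ ℝ (F y))
    rw [← hs.tsum_eq]
    refine hs.summable.tsum_pos (fun j => ?_) i ?_
    · rw [hdg]; exact mul_nonneg (hcpos j).le (hvU _ _ hy)
    · rw [hdg]; exact mul_pos (hcpos i) hi
  have hu0 : Tendsto u (Bornology.cobounded E) (𝓝 0) := by
    have := tendsto_tsum_of_dominated_convergence (𝓕 := Bornology.cobounded E)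
      (f := fun x i => g i x) (g := fun _ => (0:ℝ)) hsum (fun i => ?_)
      (Eventually.of_forall fun x i => hg0 i x)
    · simpa using this
    · have h1 : v (e i) =ᶠ[Bornology.cobounded E] 0 := by
        rw [Metric.cobounded_eq_cocompact, ← coclosedCompact_eq_cocompact]
        exact hasCompactSupport_iff_eventuallyEq.1 (hvS (e i))
      refine Tendsto.congr' (f₁ := fun _ => (0:ℝ)) ?_ tendsto_const_nhds
      filter_upwards [h1] with x hx
      simp [hg, hx]
  refine ⟨fun x => (u x)⁻¹, huC.inv fun x => (hupos x).ne', fun x => inv_pos.2 (hupos x), ?_, ?_⟩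
  · apply Tendsto.inv_tendsto_nhdsGT_zero
    exact tendsto_nhdsWithin_iff.2 ⟨hu0, Eventually.of_forall hupos⟩
  · intro y hy
    have hd : HasFDerivAt u (fderiv ℝ u y) y := (huC.differentiable (by norm_num) y).hasFDerivAt
    have h2 := (hasDerivAt_inv (hupos y).ne').comp_hasFDerivAt y hd
    have h3 : fderiv ℝ (fun x => (u x)⁻¹) y = _ := h2.fderiv
    rw [h3]
    have := hudU y hy
    have hp := hupos y
    simp only [_root_.smul_apply, smul_eq_mul, neg_mul]
    have : 0 < (u y ^ 2)⁻¹ * fderiv ℝ u y (F y) := by positivity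
    linarith

theorem exists_W_pi {n : ℕ} (F : (Fin n → ℝ) → (Fin n → ℝ)) (hF : LocallyLipschitz F)
    (U : Set (Fin n → ℝ)) (hUo : IsOpen U) (hU0 : (0:Fin n → ℝ) ∈ U)
    (hsol : ∀ x₀ : Fin n → ℝ, ∃ χ : ℝ → (Fin n → ℝ), χ 0 = x₀ ∧
      (∀ t : ℝ, 0 ≤ t → HasDerivAt χ (F (χ t)) t) ∧ Tendsto χ atTop (𝓝 0)) :
    ∃ W : (Fin n → ℝ) → ℝ, ContDiff ℝ 2 W ∧ (∀ x, 0 < W x) ∧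
      Tendsto W (Bornology.cobounded (Fin n → ℝ)) atTop ∧
      ∀ y, y ∉ U → fderiv ℝ W y (F y) < 0 := by
  let e : EuclideanSpace ℝ (Fin n) ≃L[ℝ] (Fin n → ℝ) := EuclideanSpace.equiv (Fin n) ℝ
  obtain ⟨W, hW, hWp, hWt, hWd⟩ := exists_W (fun z => e.symm (F (e z)))
    (e.symm.lipschitz.locallyLipschitz.comp (hF.comp e.lipschitz.locallyLipschitz))
    (e ⁻¹' U) (hUo.preimage e.continuous) (by simpa using hU0) (by
      intro z
      obtain ⟨χ, h0, h1, h2⟩ := hsol (e z)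
      refine ⟨fun t => e.symm (χ t), by simp [h0], fun t ht => ?_, ?_⟩
      · have := e.symm.hasFDerivAt.comp_hasDerivAt t (h1 t ht)
        simpa [Function.comp_def] using this
      · have := (e.symm.continuous.tendsto 0).comp h2
        simpa [Function.comp_def] using this)
  refine ⟨fun x => W (e.symm x), hW.comp e.symm.contDiff, fun x => hWp _, ?_, ?_⟩
  · refine hWt.comp ?_
    rw [Metric.cobounded_eq_cocompact, Metric.cobounded_eq_cocompact]
    exact e.symm.toHomeomorph.isClosedEmbedding.tendsto_cocompact
  · intro y hy
    have h1 := (hW.differentiable (by norm_num) (e.symm y)).hasFDerivAt.comp y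
      (e.symm.hasFDerivAt (x := y))
    have h2 : fderiv ℝ (fun x => W (e.symm x)) y = _ := h1.fderiv
    rw [h2]
    have := hWd (e.symm y) (by simpa using hy)
    simpa using this

theorem st_deriv_gt_one (s : ℝ) (hs : 1 < s) : deriv Real.smoothTransition s = 0 := by
  have : Real.smoothTransition =ᶠ[𝓝 s] fun _ => 1 := by
    filter_upwards [Ioi_mem_nhds hs] with z hz
    exact Real.smoothTransition.one_of_one_le (le_of_lt hz)
  rw [this.deriv_eq]; simp

theorem glue {E : Type} [NormedAddCommGroup E] [NormedSpace ℝ E] [ProperSpace E]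
    (F : E → E) (Q W : E → ℝ)
    (hQ : ContDiff ℝ 2 Q) (hW : ContDiff ℝ 2 W) (hQ0 : Q 0 = 0) (hQp : ∀ x, x ≠ 0 → 0 < Q x)
    (hWp : ∀ x, 0 < W x) (hWt : Tendsto W (Bornology.cobounded E) atTop)
    (c c₁ : ℝ) (hc : 0 < c) (hcc : c < c₁) (hQb : Bornology.IsBounded {x | Q x ≤ c₁})
    (hQd : ∀ x, x ≠ 0 → Q x ≤ c₁ → fderiv ℝ Q x (F x) < 0)
    (hWd : ∀ x, c ≤ Q x → fderiv ℝ W x (F x) < 0) :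
    ∃ V : E → ℝ, ContDiff ℝ 2 V ∧ Tendsto V (Bornology.cobounded E) atTop ∧ V 0 = 0 ∧
      (∀ x, x ≠ 0 → 0 < V x) ∧ (∀ x, Q x ≤ c → V x = Q x) ∧
      ∀ x, x ≠ 0 → fderiv ℝ V x (F x) < 0 := by
  have hk : 0 < c₁ - c := sub_pos.2 hcc
  set σ : E → ℝ := fun x => (c₁ - c)⁻¹ * (Q x - c) with hσ
  set ω : E → ℝ := fun x => Real.smoothTransition (σ x) with hω
  have hωC : ContDiff ℝ 2 ω := by
    have h0 : ContDiff ℝ 2 Real.smoothTransition := Real.smoothTransition.contDiff (n := 2)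
    exact h0.comp (contDiff_const.mul (hQ.sub contDiff_const))
  have hω0 : ∀ x, Q x ≤ c → ω x = 0 := fun x hx =>
    Real.smoothTransition.zero_of_nonpos
      (mul_nonpos_of_nonneg_of_nonpos (inv_nonneg.2 hk.le) (by linarith))
  have hσ1 : ∀ x, c₁ < Q x → 1 < σ x := by
    intro x hx
    rw [hσ]
    simp only
    rw [inv_mul_eq_div, one_lt_div hk]
    linarith
  have hω1 : ∀ x, c₁ < Q x → ω x = 1 := fun x hx =>
    Real.smoothTransition.one_of_one_le (hσ1 x hx).le
  have hωp : ∀ x, c < Q x → 0 < ω x := fun x hx =>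
    Real.smoothTransition.pos_of_pos (mul_pos (inv_pos.2 hk) (by linarith))
  have hωn : ∀ x, 0 ≤ ω x := fun x => Real.smoothTransition.nonneg _
  have hωl : ∀ x, ω x ≤ 1 := fun x => Real.smoothTransition.le_one _
  refine ⟨fun x => Q x + ω x * (c₁ + W x - Q x),
    hQ.add (hωC.mul ((contDiff_const.add hW).sub hQ)), ?_, ?_, ?_, ?_, ?_⟩
  · refine Tendsto.congr' (f₁ := fun x => c₁ + W x) ?_ (tendsto_atTop_add_const_left _ _ hWt)
    have hQb' : {x | Q x ≤ c₁}ᶜ ∈ Bornology.cobounded E := Bornology.isBounded_def.1 hQb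
    filter_upwards [hQb'] with x hx
    have hx' : c₁ < Q x := not_le.1 hx
    rw [hω1 x hx']
    ring
  · simp [hω0 0 (by rw [hQ0]; exact hc.le), hQ0]
  · intro x hx
    rcases le_or_gt (Q x) c₁ with h | h
    · have := hQp x hx
      have := hWp x
      have := mul_nonneg (hωn x) (by linarith : 0 ≤ c₁ + W x - Q x)
      linarith
    · simp only [hω1 x h]
      have := hWp x
      linarith
  · intro x hx
    simp only [hω0 x hx]; ring
  · intro x hx
    have dQ : HasFDerivAt Q (fderiv ℝ Q x) x := (hQ.differentiable (by norm_num) x).hasFDerivAt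
    have dW : HasFDerivAt W (fderiv ℝ W x) x := (hW.differentiable (by norm_num) x).hasFDerivAt
    have dσ : HasFDerivAt σ ((c₁ - c)⁻¹ • fderiv ℝ Q x) x := (dQ.sub_const c).const_mul _
    have dω : HasFDerivAt ω _ x := (st_hasDerivAt (σ x)).comp_hasFDerivAt x dσ
    have dV := (dQ.add (dω.mul ((dW.const_add c₁).sub dQ)))
    have h2 : fderiv ℝ (fun x => Q x + ω x * (c₁ + W x - Q x)) x = _ := dV.fderiv
    rw [h2]
    simp only [_root_.add_apply, _root_.smul_apply, _root_.sub_apply, smul_eq_mul, Pi.sub_apply]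
    set D := deriv Real.smoothTransition (σ x) with hD
    have hDn : 0 ≤ D := st_deriv_nonneg _
    have hW0 := hWp x
    have hk' := inv_pos.2 hk
    rcases le_or_gt (Q x) c₁ with h | h
    · have hq := hQd x hx h
      have t1 : 0 ≤ (c₁ + W x - Q x) * (D * (c₁ - c)⁻¹) * (-(fderiv ℝ Q x) (F x)) :=
        mul_nonneg (mul_nonneg (by linarith) (mul_nonneg hDn hk'.le)) (by linarith)
      rcases le_or_gt (Q x) c with h' | h'
      · rw [hω0 x h']
        nlinarith
      · have hw := hWd x h'.le
        have t2 := mul_pos (hωp x h') (neg_pos.2 hw)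
        have t3 := mul_nonneg (sub_nonneg.2 (hωl x)) (neg_pos.2 hq).le
        nlinarith
    · have hD0 : D = 0 := st_deriv_gt_one _ (hσ1 x h)
      rw [hD0, hω1 x h]
      have hw := hWd x (by linarith)
      linarith

theorem posDef_lower {n : ℕ} (S : Matrix (Fin n) (Fin n) ℝ) (hS : S.PosDef) :
    ∃ m : ℝ, 0 < m ∧ ∀ x : Fin n → ℝ, m * ‖x‖^2 ≤ x ⬝ᵥ S *ᵥ x := by
  have hc : Continuous fun x : Fin n → ℝ => x ⬝ᵥ S *ᵥ x := by fun_prop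
  have hpos : ∀ x : Fin n → ℝ, x ≠ 0 → 0 < x ⬝ᵥ S *ᵥ x := fun x hx => by
    simpa using hS.dotProduct_mulVec_pos hx
  obtain ⟨m, hm, hm2⟩ : ∃ m : ℝ, 0 < m ∧ ∀ x ∈ Metric.sphere (0:Fin n → ℝ) 1,
      m ≤ x ⬝ᵥ S *ᵥ x := by
    rcases (Metric.sphere (0:Fin n → ℝ) 1).eq_empty_or_nonempty with h | h
    · exact ⟨1, one_pos, by simp [h]⟩
    · obtain ⟨z, hz, hz2⟩ := (isCompact_sphere (0:Fin n → ℝ) 1).exists_isMinOn h hc.continuousOn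
      refine ⟨_, hpos z ?_, fun x hx => hz2 hx⟩
      rintro rfl
      simp at hz
  refine ⟨m, hm, fun x => ?_⟩
  by_cases hx : x = 0
  · simp [hx]
  · have hn : 0 < ‖x‖ := norm_pos_iff.2 hx
    have h1 := hm2 (‖x‖⁻¹ • x) (by simp [norm_smul, hn.ne'])
    simp only [Matrix.mulVec_smul, smul_dotProduct, dotProduct_smul, smul_eq_mul] at h1
    calc m * ‖x‖^2 ≤ (‖x‖⁻¹ * (‖x‖⁻¹ * (x ⬝ᵥ S *ᵥ x))) * ‖x‖^2 := by gcongr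
      _ = _ := by field_simp

theorem closed_lip {n p : ℕ}
    (a : (Fin n → ℝ) → (Fin n → ℝ)) (b : (Fin n → ℝ) → Fin n → Fin p → ℝ)
    (ha : ContDiff ℝ 1 a) (hb : ContDiff ℝ 1 b)
    (α₀ : (Fin n → ℝ) → (Fin p → ℝ)) (hα_lip : LocallyLipschitz α₀) :
    LocallyLipschitz fun χ => a χ + (Matrix.of (b χ)).mulVec (α₀ χ) := by
  have h1 : ContDiff ℝ 1 fun q : (Fin n → ℝ) × (Fin p → ℝ) =>
      a q.1 + (Matrix.of (b q.1)).mulVec q.2 := by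
    refine (ha.comp contDiff_fst).add ?_
    rw [contDiff_pi]
    intro i
    simp only [Matrix.mulVec, dotProduct, Matrix.of_apply]
    refine ContDiff.sum fun j _ => ContDiff.mul ?_ (by fun_prop)
    have h2 := contDiff_pi.1 (contDiff_pi.1 hb i) j
    exact h2.comp contDiff_fst
  exact h1.locallyLipschitz.comp (LocallyLipschitz.id.prodMk hα_lip)

theorem closed_deriv {n p : ℕ}
    (a : (Fin n → ℝ) → (Fin n → ℝ)) (b : (Fin n → ℝ) → Fin n → Fin p → ℝ)
    (A : Matrix (Fin n) (Fin n) ℝ) (B : Matrix (Fin n) (Fin p) ℝ)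
    (K : Matrix (Fin p) (Fin n) ℝ)
    (ha : ContDiff ℝ 1 a)
    (hA : ∀ v, fderiv ℝ a 0 v = A.mulVec v)
    (hb : ContDiff ℝ 1 b) (hB : B = Matrix.of (b 0))
    (α₀ : (Fin n → ℝ) → (Fin p → ℝ))
    (hα_diff : DifferentiableAt ℝ α₀ 0)
    (hα0 : α₀ 0 = 0) (hαK : ∀ v, fderiv ℝ α₀ 0 v = K.mulVec v) :
    HasFDerivAt (fun χ => a χ + (Matrix.of (b χ)).mulVec (α₀ χ))
      (LinearMap.toContinuousLinearMap (A + B * K).mulVecLin) 0 := by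
  rw [hasFDerivAt_pi']
  intro i
  simp only [Matrix.mulVec, dotProduct, Matrix.of_apply, Pi.add_apply]
  have h1 := hasFDerivAt_pi'.1 ((ha.differentiable one_ne_zero) 0).hasFDerivAt i
  have h2 : ∀ j, HasFDerivAt (fun x => b x i j * α₀ x j) _ 0 := fun j =>
    ((contDiff_pi.1 (contDiff_pi.1 hb i) j).differentiable one_ne_zero 0).hasFDerivAt.mul
      (hasFDerivAt_pi'.1 hα_diff.hasFDerivAt j)
  refine (h1.add (HasFDerivAt.fun_sum fun j (_ : j ∈ Finset.univ) => h2 j)).congr_fderiv ?_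
  ext v
  simp [hA, hαK, hα0, hB, Matrix.add_mulVec, ← Matrix.mulVec_mulVec]
  simp [Matrix.mulVec, dotProduct]

/-- If a locally Lipschitz feedback `α₀`, differentiable at `0` with
`α₀ 0 = 0` and `Dα₀(0) = K` (where `A + BK` is Hurwitz), globally asymptotically
stabilizes `χ' = a χ + b χ · α₀ χ`, then for every positive definite `P` with
`(A+BK)ᵀP + P(A+BK)` negative definite there are a `C²` proper positive definite `V`
and `ε₂ > 0` with `V(χ) = χᵀPχ` for `‖χ‖ ≤ ε₂` (hence `H(V)(0) = 2P`) and
`∇V·(a + b α₀) < 0` away from the origin. -/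
theorem stmt18 {n p : ℕ}
    (a : (Fin n → ℝ) → (Fin n → ℝ)) (b : (Fin n → ℝ) → Fin n → Fin p → ℝ)
    (A : Matrix (Fin n) (Fin n) ℝ) (B : Matrix (Fin n) (Fin p) ℝ)
    (K : Matrix (Fin p) (Fin n) ℝ)
    (ha : ContDiff ℝ 1 a) (ha0 : a 0 = 0)
    (hA : ∀ v, fderiv ℝ a 0 v = A.mulVec v)
    (hb : ContDiff ℝ 1 b) (hB : B = Matrix.of (b 0))
    (hHurwitz : Hurwitz (A + B * K))
    (α₀ : (Fin n → ℝ) → (Fin p → ℝ))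
    (hα_lip : LocallyLipschitz α₀) (hα_diff : DifferentiableAt ℝ α₀ 0)
    (hα0 : α₀ 0 = 0) (hαK : ∀ v, fderiv ℝ α₀ 0 v = K.mulVec v)
    (hGAS : IsGAS fun χ => a χ + (Matrix.of (b χ)).mulVec (α₀ χ)) :
    ∀ P : Matrix (Fin n) (Fin n) ℝ, P.PosDef →
      (-((A + B * K)ᵀ * P + P * (A + B * K))).PosDef →
      ∃ (V : (Fin n → ℝ) → ℝ) (ε₂ : ℝ), 0 < ε₂ ∧
        ContDiff ℝ 2 V ∧ (∀ χ, 0 ≤ V χ) ∧ IsProper V ∧ IsPosDefFn V ∧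
        (∀ χ : Fin n → ℝ, ‖χ‖ ≤ ε₂ → V χ = χ ⬝ᵥ P.mulVec χ) ∧
        hessianAt V 0 = (2:ℝ) • P ∧
        (∀ χ : Fin n → ℝ, χ ≠ 0 →
          fderiv ℝ V χ (a χ + (Matrix.of (b χ)).mulVec (α₀ χ)) < 0) := by
  intro P hP hN
  set F : (Fin n → ℝ) → (Fin n → ℝ) := fun χ => a χ + (Matrix.of (b χ)).mulVec (α₀ χ) with hFdef
  have hFlip : LocallyLipschitz F := closed_lip a b ha hb α₀ hα_lip
  have hFd := closed_deriv a b A B K ha hA hb hB α₀ hα_diff hα0 hαK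
  set M := A + B * K with hM
  have hF0 : F 0 = 0 := by simp [hFdef, ha0, hα0]
  set Bl : (Fin n → ℝ) →L[ℝ] (Fin n → ℝ) →L[ℝ] ℝ :=
    (Matrix.toLinearMap₂' ℝ P).toContinuousBilinearMap with hBl
  have hBa : ∀ x y, Bl x y = x ⬝ᵥ P *ᵥ y := fun x y => by
    rw [hBl, LinearMap.toContinuousBilinearMap_apply, Matrix.toLinearMap₂'_apply']
  set Q : (Fin n → ℝ) → ℝ := fun x => x ⬝ᵥ P *ᵥ x with hQdef
  have hQB : Q = fun x => Bl x x := by ext x; rw [hBa]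
  have hQd : ∀ x, HasFDerivAt Q (Bl x + Bl.flip x) x := by
    intro x
    rw [hQB]
    have := Bl.hasFDerivAt_of_bilinear (hasFDerivAt_id x) (hasFDerivAt_id x)
    refine HasFDerivAt.congr_fderiv this ?_
    ext v
    simp
  have hQC : ContDiff ℝ 2 Q := by
    rw [hQB]
    exact Bl.contDiff.clm_apply contDiff_id
  have hQ0 : Q 0 = 0 := by simp [hQdef]
  obtain ⟨mP, hmP, hmP2⟩ := posDef_lower P hP
  obtain ⟨m, hm, hm2⟩ := posDef_lower _ hN
  have hQp : ∀ x, x ≠ 0 → 0 < Q x := fun x hx =>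
    lt_of_lt_of_le (by have := norm_pos_iff.2 hx; positivity) (hmP2 x)
  -- local decrease
  obtain ⟨δ, hδ, hdec⟩ : ∃ δ > 0, ∀ x : Fin n → ℝ, x ≠ 0 → ‖x‖ < δ →
      fderiv ℝ Q x (F x) < 0 := by
    set η : ℝ := m / (4 * (‖Bl‖ + 1)) with hη
    have hηp : 0 < η := by positivity
    have hev := hFd.isLittleO.def hηp
    obtain ⟨δ, hδ, hball⟩ := Metric.eventually_nhds_iff.1 hev
    refine ⟨δ, hδ, fun x hx hxδ => ?_⟩
    have h1 := hball (y := x) (by simpa using hxδ)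
    have h1 : ‖F x - M *ᵥ x‖ ≤ η * ‖x‖ := by
      simpa [hF0, hFdef, ha0, hα0] using h1
    set r := F x - M *ᵥ x with hr
    have hFx : F x = M *ᵥ x + r := by simp [hr]
    have hlin : Bl x (M *ᵥ x) + Bl (M *ᵥ x) x = - (x ⬝ᵥ (-(Mᵀ * P + P * M)) *ᵥ x) := by
      rw [hBa, hBa, Matrix.neg_mulVec, dotProduct_neg, neg_neg, Matrix.add_mulVec (Mᵀ * P) (P * M) x, dotProduct_add,
        ← Matrix.mulVec_mulVec, ← Matrix.mulVec_mulVec, Matrix.dotProduct_mulVec x Mᵀ,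
        Matrix.vecMul_transpose]
      ring
    have e1 : Bl x r ≤ ‖Bl‖ * ‖x‖ * ‖r‖ := (le_abs_self _).trans (Bl.le_opNorm₂ x r)
    have e2 : Bl r x ≤ ‖Bl‖ * ‖r‖ * ‖x‖ := (le_abs_self _).trans (Bl.le_opNorm₂ r x)
    have hx0 := norm_pos_iff.2 hx
    have hB0 := norm_nonneg Bl
    have e3 : ‖Bl‖ * ‖x‖ * ‖r‖ ≤ ‖Bl‖ * ‖x‖ * (η * ‖x‖) := by gcongr
    have e4 : ‖Bl‖ * η ≤ m / 4 := by
      rw [hη, mul_div_assoc', div_le_div_iff₀ (by positivity) (by norm_num)]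
      nlinarith
    have e5 : ‖Bl‖ * η * ‖x‖^2 ≤ m / 4 * ‖x‖^2 := by gcongr
    have e6 := hm2 x
    rw [(hQd x).fderiv, hFx]
    simp only [_root_.add_apply, ContinuousLinearMap.flip_apply, map_add]
    have e7 : 0 < m * ‖x‖^2 := by positivity
    nlinarith
  set c₁ : ℝ := mP * (δ/2)^2 with hc1
  have hc1p : 0 < c₁ := by positivity
  have hsub : ∀ x, Q x ≤ c₁ → ‖x‖ < δ := by
    intro x hx
    have h1 := (hmP2 x).trans hx
    have h2 : ‖x‖^2 ≤ (δ/2)^2 := le_of_mul_le_mul_left h1 hmP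
    have := (abs_le_of_sq_le_sq' h2 (by positivity)).2
    linarith
  set c : ℝ := c₁ / 2 with hc
  have hcp : 0 < c := by positivity
  have hQcont : Continuous Q := hQC.continuous
  obtain ⟨W, hWC, hWp, hWt, hWd⟩ := exists_W_pi F hFlip {x | Q x < c}
    (isOpen_lt hQcont continuous_const) (by simpa [hQ0] using hcp) hGAS.2
  obtain ⟨V, hVC, hVt, hV0, hVp, hVQ, hVd⟩ := glue F Q W hQC hWC hQ0 hQp hWp hWt c c₁ hcp
    (by rw [hc]; linarith)
    (Metric.isBounded_ball.subset (fun x hx => by simpa using hsub x hx :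
      {x | Q x ≤ c₁} ⊆ Metric.ball 0 δ))
    (fun x hx hx1 => hdec x hx (hsub x hx1))
    (fun x hx => hWd x (by simpa using hx))
  have hlt : ∀ᶠ x in 𝓝 (0 : Fin n → ℝ), Q x < c :=
    (isOpen_lt hQcont continuous_const).mem_nhds (by simpa [hQ0] using hcp)
  obtain ⟨ε, hε, hεQ⟩ := Metric.eventually_nhds_iff.1 hlt
  refine ⟨V, ε/2, by positivity, hVC, ?_, hVt, ⟨hV0, hVp⟩, ?_, ?_, hVd⟩
  · intro x
    by_cases hx : x = 0
    · rw [hx, hV0]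
    · exact (hVp x hx).le
  · intro x hx
    exact hVQ x (hεQ (by rw [dist_zero_right]; linarith)).le
  · have hev : V =ᶠ[𝓝 0] Q := by
      filter_upwards [Metric.ball_mem_nhds (0 : Fin n → ℝ) hε] with x hx
      exact hVQ x (hεQ hx).le
    have hfd : fderiv ℝ Q = fun x => (Bl + Bl.flip) x := by
      ext1 x
      rw [(hQd x).fderiv]; rfl
    have hsym : Pᵀ = P := by simpa using hP.isHermitian.eq
    ext i j
    have hs : P j i = P i j := by conv_rhs => rw [← hsym, Matrix.transpose_apply]
    rw [hessianAt, Matrix.of_apply, (hev.iteratedFDeriv ℝ 2).eq_of_nhds,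
      iteratedFDeriv_two_apply, hfd, ContinuousLinearMap.fderiv]
    simp [hBa, hs]
    ring
end
end
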